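/- Correspondence of σπα-normal forms with σ-normal forms: suppose Γ ⊢ M reduces to Σ ⊢ L by zero or more steps of the σπα-judgement reduction ⇝, Σ ⊢ L is a σπα-normal form with respect to ⇝, (Γ ⊢ M) ⟹ U, and (Σ ⊢ L) ⟹ V. Then V is a σ-normal form and U σ-reduces to V in zero or more steps. -/

import Mathlib

/- Named terms and substitutions of the λπ-calculus. Variables are natural numbers. -/
mutual
inductive Tm : Type
  | var : ℕ → Tm
  | app : Tm → Tm → Tm
  | lam : ℕ → Tm → Tm
  | clos : Subst → Tm → Tm
inductive Subst : Type
  | id : Subst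
  | pi : ℕ → Subst
  | cons : Subst → Tm → ℕ → Subst
  | comp : Subst → Subst → Subst
end

/- Contexts are lists of variables; the head of the list is the *rightmost* variable,
so the context `Γ, a` of the paper is `a :: Γ`. -/
mutual
/-- `WfTm Γ M` is the judgement `Γ ⊢ M`. -/
inductive WfTm : List ℕ → Tm → Prop
  | var (Γ : List ℕ) (a : ℕ) : WfTm (a :: Γ) (.var a)
  | weak {Γ : List ℕ} {a : ℕ} (b : ℕ) : a ≠ b → WfTm Γ (.var a) → WfTm (b :: Γ) (.var a)
  | app {Γ M N} : WfTm Γ M → WfTm Γ N → WfTm Γ (.app M N)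
  | lam {Γ a M} : WfTm (a :: Γ) M → WfTm Γ (.lam a M)
  | clos {Γ s Δ M} : WfSub Γ s Δ → WfTm Δ M → WfTm Γ (.clos s M)
/-- `WfSub Γ s Δ` is the judgement `Γ ⊢ s ▷ Δ`. -/
inductive WfSub : List ℕ → Subst → List ℕ → Prop
  | id (Γ) : WfSub Γ .id Γ
  | pi (Γ a) : WfSub (a :: Γ) (.pi a) Γ
  | cons {Γ s Δ N} (a) : WfSub Γ s Δ → WfTm Γ N → WfSub Γ (.cons s N a) (a :: Δ)
  | comp {Γ s Δ q Θ} : WfSub Γ s Δ → WfSub Δ q Θ → WfSub Γ (.comp s q) Θ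
end

/-- The operator `O_{λa}` on sequences of finite sets (sequences are 0-indexed:
index `n` corresponds to the paper's index `n+1`). -/
def Olam (a : ℕ) (A : ℕ → Finset ℕ) : ℕ → Finset ℕ
  | 0 => (A 0).erase a ∪ A 1
  | n + 1 => A (n + 2)

/-- The operator `O_π`. -/
def Opi (A : ℕ → Finset ℕ) : ℕ → Finset ℕ
  | 0 => ∅
  | n + 1 => A n

mutual
/-- The free-variable sequence of a term: `FV M n` is the paper's `FV_{n+1}(M)`. -/
def FV : Tm → ℕ → Finset ℕ
  | .var a => fun n => if n = 0 then {a} else ∅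
  | .app M N => fun n => FV M n ∪ FV N n
  | .lam a M => Olam a (FV M)
  | .clos s M => Osub s (FV M)
/-- The operator `O_s` associated with a substitution `s`. -/
def Osub : Subst → (ℕ → Finset ℕ) → (ℕ → Finset ℕ)
  | .id => fun A => A
  | .pi _ => fun A => Opi A
  | .cons s N a => fun A n => Osub s (Olam a A) n ∪ FV N n
  | .comp s q => fun A => Osub s (Osub q A)
end

/-- Iterated abstraction `λΓ.M` (recall the head of the list is the rightmost variable). -/
def lamCtx : List ℕ → Tm → Tm
  | [], M => M
  | a :: Γ, M => lamCtx Γ (.lam a M)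

/-- Free variables of a judgement: `FV(Γ ⊢ M) = FV(λΓ.M)`. -/
def FVJ (Γ : List ℕ) (M : Tm) : ℕ → Finset ℕ := FV (lamCtx Γ M)

/-- Iterated lifting `⇑_Δ(s)`. -/
def Uparrow : List ℕ → Subst → Subst
  | [], s => s
  | a :: Δ, s => .cons (.comp (.pi a) (Uparrow Δ s)) (.var a) a

/- One-step reduction of the λπ-calculus (compatible closure).  The Boolean
parameter tells whether the rule `Beta` is allowed: `StepTm true` is λπ-reduction,
`StepTm false` is σπα-reduction. -/
mutual
inductive StepTm : Bool → Tm → Tm → Prop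
  | beta {a : ℕ} {M N : Tm} :
      StepTm true (.app (.lam a M) N) (.clos (.cons .id N a) M)
  | abs {β : Bool} {s : Subst} {a : ℕ} {M : Tm} :
      StepTm β (.clos s (.lam a M))
        (.lam a (.clos (.cons (.comp (.pi a) s) (.var a) a) M))
  | app {β : Bool} {s : Subst} {M N : Tm} :
      StepTm β (.clos s (.app M N)) (.app (.clos s M) (.clos s N))
  | consVar {β : Bool} {s : Subst} {N : Tm} {a : ℕ} :
      StepTm β (.clos (.cons s N a) (.var a)) N
  | new {β : Bool} {s : Subst} {N : Tm} {a b : ℕ} : a ≠ b →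
      StepTm β (.clos (.cons s N a) (.var b)) (.clos s (.var b))
  | idVar {β : Bool} {a : ℕ} : StepTm β (.clos .id (.var a)) (.var a)
  | clos {β : Bool} {s q : Subst} {M : Tm} :
      StepTm β (.clos s (.clos q M)) (.clos (.comp s q) M)
  | pi1 {β : Bool} {a b : ℕ} : a ≠ b → StepTm β (.clos (.pi a) (.var b)) (.var b)
  | pi2 {β : Bool} {s : Subst} {a b : ℕ} : a ≠ b →
      StepTm β (.clos (.comp s (.pi a)) (.var b)) (.clos s (.var b))
  | alpha1 {β : Bool} {a b : ℕ} {M : Tm} :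
      (∃ i, a ∈ FV (.lam a M) i) → (∀ i, b ∉ FV (.lam a M) i) →
      StepTm β (.lam a M) (.lam b (.clos (.cons (.pi b) (.var b) a) M))
  | lamCong {β : Bool} {a : ℕ} {M₁ M₂ : Tm} :
      StepTm β M₁ M₂ → StepTm β (.lam a M₁) (.lam a M₂)
  | appL {β : Bool} {M₁ M₂ N : Tm} : StepTm β M₁ M₂ → StepTm β (.app M₁ N) (.app M₂ N)
  | appR {β : Bool} {M N₁ N₂ : Tm} : StepTm β N₁ N₂ → StepTm β (.app M N₁) (.app M N₂)
  | closL {β : Bool} {s₁ s₂ : Subst} {M : Tm} :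
      StepSub β s₁ s₂ → StepTm β (.clos s₁ M) (.clos s₂ M)
  | closR {β : Bool} {s : Subst} {M₁ M₂ : Tm} :
      StepTm β M₁ M₂ → StepTm β (.clos s M₁) (.clos s M₂)
inductive StepSub : Bool → Subst → Subst → Prop
  | ass {β : Bool} {s q r : Subst} :
      StepSub β (.comp s (.comp q r)) (.comp (.comp s q) r)
  | idR {β : Bool} {s : Subst} : StepSub β (.comp s .id) s
  | idShift {β : Bool} {a : ℕ} : StepSub β (.comp .id (.pi a)) (.pi a)
  | consShift {β : Bool} {s : Subst} {N : Tm} {a : ℕ} :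
      StepSub β (.comp (.cons s N a) (.pi a)) s
  | map {β : Bool} {s q : Subst} {N : Tm} {a : ℕ} :
      StepSub β (.comp s (.cons q N a)) (.cons (.comp s q) (.clos s N) a)
  | consL {β : Bool} {s₁ s₂ : Subst} {N : Tm} {a : ℕ} :
      StepSub β s₁ s₂ → StepSub β (.cons s₁ N a) (.cons s₂ N a)
  | consR {β : Bool} {s : Subst} {N₁ N₂ : Tm} {a : ℕ} :
      StepTm β N₁ N₂ → StepSub β (.cons s N₁ a) (.cons s N₂ a)
  | compL {β : Bool} {s₁ s₂ q : Subst} :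
      StepSub β s₁ s₂ → StepSub β (.comp s₁ q) (.comp s₂ q)
  | compR {β : Bool} {s q₁ q₂ : Subst} :
      StepSub β q₁ q₂ → StepSub β (.comp s q₁) (.comp s q₂)
end

/-- One-step reduction `⇝` on judgements `Γ ⊢ M`, including the rule `α₂`.
`StepJ true` is λπ, `StepJ false` is σπα. -/
inductive StepJ (β : Bool) : List ℕ × Tm → List ℕ × Tm → Prop
  | step {Γ : List ℕ} {M₁ M₂ : Tm} : StepTm β M₁ M₂ → StepJ β (Γ, M₁) (Γ, M₂)
  | alpha2 {Γ Δ : List ℕ} {a b : ℕ} {M : Tm} :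
      (∃ i, a ∈ FVJ (Δ ++ [a]) M i) → (∀ i, b ∉ FVJ (Δ ++ [a]) M i) →
      StepJ β (Δ ++ a :: Γ, M)
        (Δ ++ b :: Γ, .clos (Uparrow Δ (.cons (.pi b) (.var b) a)) M)

/- Name-free (de Bruijn) terms and substitutions. -/
mutual
inductive NTm : Type
  | one : NTm
  | app : NTm → NTm → NTm
  | lam : NTm → NTm
  | clos : NSub → NTm → NTm
inductive NSub : Type
  | id : NSub
  | pi : NSub
  | cons : NSub → NTm → NSub
  | comp : NSub → NSub → NSub
end

/-- `piIter n` is the left-nested composition of `n+1` copies of `π`. -/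
def piIter : ℕ → NSub
  | 0 => .pi
  | k + 1 => .comp (piIter k) .pi

/-- `dbr n` is the de Bruijn index `n+1̲`: `dbr 0 = 1` and
`dbr (n+1) = ((…(π∘π)∘…)∘π)∘1` with `n+1` occurrences of `π`. -/
def dbr : ℕ → NTm
  | 0 => .one
  | n + 1 => .clos (piIter n) .one

/- One-step reduction of λσ (`NStepTm true`) resp. σ (`NStepTm false`)
on name-free terms/substitutions. -/
mutual
inductive NStepTm : Bool → NTm → NTm → Prop
  | beta {U V : NTm} : NStepTm true (.app (.lam U) V) (.clos (.cons .id V) U)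
  | abs {β : Bool} {u : NSub} {U : NTm} :
      NStepTm β (.clos u (.lam U)) (.lam (.clos (.cons (.comp .pi u) .one) U))
  | app {β : Bool} {u : NSub} {U V : NTm} :
      NStepTm β (.clos u (.app U V)) (.app (.clos u U) (.clos u V))
  | consVar {β : Bool} {u : NSub} {V : NTm} : NStepTm β (.clos (.cons u V) .one) V
  | idVar {β : Bool} : NStepTm β (.clos .id .one) .one
  | clos {β : Bool} {u v : NSub} {U : NTm} :
      NStepTm β (.clos u (.clos v U)) (.clos (.comp u v) U)
  | lamCong {β : Bool} {U₁ U₂ : NTm} : NStepTm β U₁ U₂ → NStepTm β (.lam U₁) (.lam U₂)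
  | appL {β : Bool} {U₁ U₂ V : NTm} : NStepTm β U₁ U₂ → NStepTm β (.app U₁ V) (.app U₂ V)
  | appR {β : Bool} {U V₁ V₂ : NTm} : NStepTm β V₁ V₂ → NStepTm β (.app U V₁) (.app U V₂)
  | closL {β : Bool} {u₁ u₂ : NSub} {U : NTm} :
      NStepSub β u₁ u₂ → NStepTm β (.clos u₁ U) (.clos u₂ U)
  | closR {β : Bool} {u : NSub} {U₁ U₂ : NTm} :
      NStepTm β U₁ U₂ → NStepTm β (.clos u U₁) (.clos u U₂)
inductive NStepSub : Bool → NSub → NSub → Prop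
  | ass {β : Bool} {u v w : NSub} : NStepSub β (.comp u (.comp v w)) (.comp (.comp u v) w)
  | idR {β : Bool} {u : NSub} : NStepSub β (.comp u .id) u
  | idShift {β : Bool} : NStepSub β (.comp .id .pi) .pi
  | consShift {β : Bool} {u : NSub} {V : NTm} : NStepSub β (.comp (.cons u V) .pi) u
  | map {β : Bool} {u v : NSub} {V : NTm} :
      NStepSub β (.comp u (.cons v V)) (.cons (.comp u v) (.clos u V))
  | consL {β : Bool} {u₁ u₂ : NSub} {V : NTm} :
      NStepSub β u₁ u₂ → NStepSub β (.cons u₁ V) (.cons u₂ V)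
  | consR {β : Bool} {u : NSub} {V₁ V₂ : NTm} :
      NStepTm β V₁ V₂ → NStepSub β (.cons u V₁) (.cons u V₂)
  | compL {β : Bool} {u₁ u₂ v : NSub} :
      NStepSub β u₁ u₂ → NStepSub β (.comp u₁ v) (.comp u₂ v)
  | compR {β : Bool} {u v₁ v₂ : NSub} :
      NStepSub β v₁ v₂ → NStepSub β (.comp u v₁) (.comp u v₂)
end

/- The correspondence `(Γ ⊢ M) ⟹ U` resp. `(Γ ⊢ s ▷ Δ) ⟹ u` between judgements and
name-free terms/substitutions (Definition 7.6 of the paper). -/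
mutual
inductive TrTm : List ℕ → Tm → NTm → Prop
  | var (Γ : List ℕ) (a : ℕ) : TrTm (a :: Γ) (.var a) (dbr 0)
  | weak {Γ : List ℕ} {a : ℕ} {n : ℕ} (b : ℕ) : a ≠ b →
      TrTm Γ (.var a) (dbr n) → TrTm (b :: Γ) (.var a) (dbr (n + 1))
  | app {Γ M N U V} : TrTm Γ M U → TrTm Γ N V → TrTm Γ (.app M N) (.app U V)
  | lam {Γ a M U} : TrTm (a :: Γ) M U → TrTm Γ (.lam a M) (.lam U)
  | clos {Γ s Δ M u U} : TrSub Γ s Δ u → TrTm Δ M U → TrTm Γ (.clos s M) (.clos u U)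
inductive TrSub : List ℕ → Subst → List ℕ → NSub → Prop
  | id (Γ) : TrSub Γ .id Γ .id
  | pi (Γ a) : TrSub (a :: Γ) (.pi a) Γ .pi
  | cons {Γ s Δ N u V} (a) : TrSub Γ s Δ u → TrTm Γ N V →
      TrSub Γ (.cons s N a) (a :: Δ) (.cons u V)
  | comp {Γ s Δ q Θ u v} : TrSub Γ s Δ u → TrSub Δ q Θ v →
      TrSub Γ (.comp s q) Θ (.comp u v)
end


/- ===== Pure de Bruijn terms and semantics ===== -/
inductive Lm : Type
  | var : ℕ → Lm
  | app : Lm → Lm → Lm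
  | lam : Lm → Lm

namespace Lm

def scons (t : Lm) (σ : ℕ → Lm) : ℕ → Lm
  | 0 => t
  | n + 1 => σ n

def upr (ξ : ℕ → ℕ) : ℕ → ℕ
  | 0 => 0
  | n + 1 => ξ n + 1

def ren : (ℕ → ℕ) → Lm → Lm
  | ξ, .var n => .var (ξ n)
  | ξ, .app t u => .app (ren ξ t) (ren ξ u)
  | ξ, .lam t => .lam (ren (upr ξ) t)

def up (σ : ℕ → Lm) : ℕ → Lm := scons (.var 0) (fun n => ren Nat.succ (σ n))

def sub : (ℕ → Lm) → Lm → Lm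
  | σ, .var n => σ n
  | σ, .app t u => .app (sub σ t) (sub σ u)
  | σ, .lam t => .lam (sub (up σ) t)

theorem up_ren (ξ : ℕ → ℕ) : up (fun n => .var (ξ n)) = fun n => .var (upr ξ n) := by
  funext n; cases n <;> rfl

theorem ren_eq_sub (t : Lm) : ∀ ξ, ren ξ t = sub (fun n => .var (ξ n)) t := by
  induction t with
  | var n => intro ξ; rfl
  | app t u iht ihu => intro ξ; simp [ren, sub, iht, ihu]
  | lam t ih => intro ξ; simp [ren, sub, ih, up_ren]

theorem up_var : up Lm.var = Lm.var := by
  funext n; cases n <;> rfl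

theorem sub_var (t : Lm) : sub Lm.var t = t := by
  induction t with
  | var n => rfl
  | app t u iht ihu => simp [sub, iht, ihu]
  | lam t ih => simp [sub, up_var, ih]

theorem ren_ren (t : Lm) : ∀ ξ ζ, ren ξ (ren ζ t) = ren (fun n => ξ (ζ n)) t := by
  induction t with
  | var n => intros; rfl
  | app t u iht ihu => intros; simp [ren, iht, ihu]
  | lam t ih =>
    intro ξ ζ
    simp only [ren, ih]
    congr 2; funext n; cases n <;> rfl

theorem sub_ren (t : Lm) : ∀ σ ζ, sub σ (ren ζ t) = sub (fun n => σ (ζ n)) t := by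
  induction t with
  | var n => intros; rfl
  | app t u iht ihu => intros; simp [ren, sub, iht, ihu]
  | lam t ih =>
    intro σ ζ
    simp only [ren, sub, ih]
    congr 2; funext n; cases n <;> rfl

theorem ren_sub (t : Lm) : ∀ ξ σ, ren ξ (sub σ t) = sub (fun n => ren ξ (σ n)) t := by
  induction t with
  | var n => intros; rfl
  | app t u iht ihu => intros; simp [ren, sub, iht, ihu]
  | lam t ih =>
    intro ξ σ
    simp only [ren, sub, ih]
    congr 2; funext n
    cases n with
    | zero => rfl
    | succ n => simp only [up, scons, ren_ren]; rfl

theorem sub_sub (t : Lm) : ∀ σ τ, sub σ (sub τ t) = sub (fun n => sub σ (τ n)) t := by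
  induction t with
  | var n => intros; rfl
  | app t u iht ihu => intros; simp [sub, iht, ihu]
  | lam t ih =>
    intro σ τ
    simp only [sub, ih]
    congr 2; funext n
    cases n with
    | zero => rfl
    | succ n => simp only [up, scons, sub_ren, ren_sub]

theorem up_eq (σ : ℕ → Lm) :
    up σ = scons (.var 0) (fun n => sub (fun k => .var (k + 1)) (σ n)) := by
  funext n
  cases n with
  | zero => rfl
  | succ n => simp only [up, scons, ren_eq_sub]

theorem scons_shift : scons (.var 0) (fun k => .var (k + 1)) = Lm.var := by
  funext n; cases n <;> rfl

end Lm

open Lm in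
mutual
def semT : NTm → Lm
  | .one => .var 0
  | .app U V => .app (semT U) (semT V)
  | .lam U => .lam (semT U)
  | .clos u U => sub (semS u) (semT U)
def semS : NSub → (ℕ → Lm)
  | .id => Lm.var
  | .pi => fun n => .var (n + 1)
  | .cons u V => scons (semT V) (semS u)
  | .comp u v => fun n => sub (semS u) (semS v n)
end

def quo : Lm → NTm
  | .var n => dbr n
  | .app t u => .app (quo t) (quo u)
  | .lam t => .lam (quo t)

theorem semS_piIter (k : ℕ) : semS (piIter k) = fun n => Lm.var (n + k + 1) := by
  induction k with
  | zero => rfl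
  | succ k ih => funext n; simp [piIter, semS, ih, Lm.sub]; omega

theorem semT_dbr (n : ℕ) : semT (dbr n) = .var n := by
  cases n with
  | zero => rfl
  | succ n => simp [dbr, semT, semS_piIter, Lm.sub]

theorem dbr_inj {n m : ℕ} (h : dbr n = dbr m) : n = m := by
  have := congrArg semT h
  simpa [semT_dbr] using this

/- ===== Normalization of σ ===== -/
abbrev RT := Relation.ReflTransGen (NStepTm false)
abbrev RS := Relation.ReflTransGen (NStepSub false)

theorem RT.lam {U U'} (h : RT U U') : RT (.lam U) (.lam U') :=
  h.lift _ (fun _ _ => .lamCong)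
theorem RT.app {U U' V V'} (h : RT U U') (h' : RT V V') : RT (.app U V) (.app U' V') :=
  (h.lift (fun x => NTm.app x V) (fun _ _ => .appL)).trans
    (h'.lift (fun x => NTm.app U' x) (fun _ _ => .appR))
theorem RT.clos {u u' V V'} (h : RS u u') (h' : RT V V') : RT (.clos u V) (.clos u' V') :=
  (h.lift (fun x => NTm.clos x V) (fun _ _ => .closL)).trans
    (h'.lift (fun x => NTm.clos u' x) (fun _ _ => .closR))
theorem RS.cons {u u' V V'} (h : RS u u') (h' : RT V V') : RS (.cons u V) (.cons u' V') :=
  (h.lift (fun x => NSub.cons x V) (fun _ _ => .consL)).trans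
    (h'.lift (fun x => NSub.cons u' x) (fun _ _ => .consR))
theorem RS.comp {u u' v v'} (h : RS u u') (h' : RS v v') : RS (.comp u v) (.comp u' v') :=
  (h.lift (fun x => NSub.comp x v) (fun _ _ => .compL)).trans
    (h'.lift (fun x => NSub.comp u' x) (fun _ _ => .compR))

inductive SRep (Q : Lm → Prop) : NSub → (ℕ → Lm) → Prop
  | id : SRep Q .id Lm.var
  | pi (k : ℕ) : SRep Q (piIter k) (fun n => .var (n + k + 1))
  | cons {w σ t} : Q t → SRep Q w σ → SRep Q (.cons w (quo t)) (Lm.scons t σ)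

theorem SRep.mono {Q Q' : Lm → Prop} (h : ∀ t, Q t → Q' t) {w σ} (r : SRep Q w σ) :
    SRep Q' w σ := by
  induction r with
  | id => exact .id
  | pi k => exact .pi k
  | cons q _ ih => exact .cons (h _ q) ih

theorem comp_pi {Q w σ} (r : SRep Q w σ) :
    ∃ w', RS (.comp w .pi) w' ∧ SRep Q w' (fun n => σ (n + 1)) := by
  cases r with
  | id => exact ⟨_, .single .idShift, .pi 0⟩
  | pi k =>
    refine ⟨_, .refl, ?_⟩
    have := SRep.pi (Q := Q) (k + 1)
    have e : (fun n => Lm.var (n + (k + 1) + 1)) = fun n => Lm.var (n + 1 + k + 1) := by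
      funext n; congr 1; omega
    rw [e] at this
    exact this
  | cons q r => exact ⟨_, .single .consShift, r⟩

theorem comp_piIter {Q w σ} (r : SRep Q w σ) (k : ℕ) :
    ∃ w', RS (.comp w (piIter k)) w' ∧ SRep Q w' (fun n => σ (n + k + 1)) := by
  induction k with
  | zero => exact comp_pi r
  | succ k ih =>
    obtain ⟨w', h1, r1⟩ := ih
    obtain ⟨w2, h2, r2⟩ := comp_pi r1
    refine ⟨w2, .head .ass ((RS.comp h1 .refl).trans h2), ?_⟩
    convert r2 using 3
    omega

theorem clos_one {Q w σ} (r : SRep Q w σ) : RT (.clos w .one) (quo (σ 0)) := by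
  cases r with
  | id => exact .single .idVar
  | pi k => simp only [quo, Nat.zero_add]; exact .refl
  | cons q r => exact .single .consVar

theorem clos_dbr {Q w σ} (r : SRep Q w σ) (n : ℕ) : RT (.clos w (dbr n)) (quo (σ n)) := by
  cases n with
  | zero => exact clos_one r
  | succ n =>
    obtain ⟨w', h, r'⟩ := comp_piIter r n
    refine .head .clos ((RT.clos h .refl).trans ?_)
    simpa using clos_one r'

theorem lift_rep {Q : Lm → Prop}
    (hQ : ∀ t, Q t → RT (.clos .pi (quo t)) (quo (Lm.ren Nat.succ t)) ∧ Q (Lm.ren Nat.succ t))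
    {w σ} (r : SRep Q w σ) :
    ∃ w', RS (.comp .pi w) w' ∧ SRep Q w' (fun n => Lm.ren Nat.succ (σ n)) := by
  induction r with
  | id => exact ⟨_, .single .idR, .pi 0⟩
  | pi k =>
    obtain ⟨w', h, r'⟩ := comp_piIter (SRep.pi (Q := Q) 0) k
    exact ⟨w', h, r'⟩
  | @cons w σ t q r ih =>
    obtain ⟨w', h, r'⟩ := ih
    refine ⟨_, .head .map (RS.cons h (hQ t q).1), ?_⟩
    convert SRep.cons (hQ t q).2 r' using 1
    funext n; cases n <;> rfl

theorem clos_quo {Q : Lm → Prop}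
    (hQ : ∀ t, Q t → RT (.clos .pi (quo t)) (quo (Lm.ren Nat.succ t)) ∧ Q (Lm.ren Nat.succ t))
    (h0 : Q (.var 0)) (t : Lm) :
    ∀ {w σ}, SRep Q w σ → RT (.clos w (quo t)) (quo (Lm.sub σ t)) := by
  induction t with
  | var n => intro w σ r; exact clos_dbr r n
  | app t u iht ihu => intro w σ r; exact .head .app (RT.app (iht r) (ihu r))
  | lam t ih =>
    intro w σ r
    obtain ⟨w', h, r'⟩ := lift_rep hQ r
    refine .head .abs (RT.lam ((RT.clos (RS.cons h .refl) .refl).trans ?_))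
    exact ih (SRep.cons h0 r')

theorem clos_pi_quo (t : Lm) : RT (.clos .pi (quo t)) (quo (Lm.ren Nat.succ t)) := by
  rw [Lm.ren_eq_sub]
  refine clos_quo (Q := fun t => ∃ n, t = .var n) ?_ ⟨0, rfl⟩ t (SRep.pi 0)
  rintro _ ⟨n, rfl⟩
  exact ⟨clos_dbr (SRep.pi (Q := fun _ => True) 0) n, n + 1, rfl⟩

theorem clos_rep {w σ} (r : SRep (fun _ => True) w σ) (t : Lm) :
    RT (.clos w (quo t)) (quo (Lm.sub σ t)) :=
  clos_quo (fun t _ => ⟨clos_pi_quo t, trivial⟩) trivial t r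

theorem comp_rep {w σ w' τ} (r : SRep (fun _ => True) w σ) (r' : SRep (fun _ => True) w' τ) :
    ∃ w2, RS (.comp w w') w2 ∧ SRep (fun _ => True) w2 (fun n => Lm.sub σ (τ n)) := by
  induction r' with
  | id => exact ⟨_, .single .idR, r⟩
  | pi k => exact comp_piIter r k
  | @cons v τ t q r' ih =>
    obtain ⟨w2, h, r2⟩ := ih
    refine ⟨_, .head .map (RS.cons h (clos_rep r t)), ?_⟩
    convert SRep.cons trivial r2 using 1
    funext n; cases n <;> rfl

mutual
theorem wnT : ∀ U : NTm, RT U (quo (semT U))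
  | .one => .refl
  | .app U V => RT.app (wnT U) (wnT V)
  | .lam U => RT.lam (wnT U)
  | .clos u U => by
    obtain ⟨w, h, r⟩ := wnS u
    exact (RT.clos h (wnT U)).trans (clos_rep r _)
theorem wnS : ∀ u : NSub, ∃ w, RS u w ∧ SRep (fun _ => True) w (semS u)
  | .id => ⟨_, .refl, .id⟩
  | .pi => ⟨_, .refl, .pi 0⟩
  | .cons u V => by
    obtain ⟨w, h, r⟩ := wnS u
    exact ⟨_, RS.cons h (wnT V), .cons trivial r⟩
  | .comp u v => by
    obtain ⟨w, h, r⟩ := wnS u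
    obtain ⟨w', h', r'⟩ := wnS v
    obtain ⟨w2, h2, r2⟩ := comp_rep r r'
    exact ⟨w2, (RS.comp h h').trans h2, r2⟩
end

theorem piIter_nf (k : ℕ) : ∀ w, ¬ NStepSub false (piIter k) w := by
  induction k with
  | zero => intro w h; cases h
  | succ k ih =>
    intro w h
    cases k with
    | zero =>
      simp only [piIter] at h
      cases h with
      | compL h => cases h
      | compR h => cases h
    | succ k =>
      simp only [piIter] at h ih
      cases h with
      | compL h => exact ih _ h
      | compR h => cases h

theorem dbr_nf (n : ℕ) : ∀ W, ¬ NStepTm false (dbr n) W := by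
  intro W h
  cases n with
  | zero => cases h
  | succ n =>
    have := piIter_nf n
    cases n with
    | zero =>
      simp only [dbr, piIter] at h
      cases h with
      | closL h => cases h
      | closR h => cases h
    | succ n =>
      simp only [dbr, piIter] at h this
      cases h with
      | closL h => exact this _ h
      | closR h => cases h

theorem quo_nf (t : Lm) : ∀ W, ¬ NStepTm false (quo t) W := by
  induction t with
  | var n => exact dbr_nf n
  | app t u iht ihu =>
    intro W h
    simp only [quo] at h
    generalize hb : false = b at h
    generalize hx : NTm.app (quo t) (quo u) = x at h
    cases h <;> simp_all
  | lam t ih =>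
    intro W h
    cases h with
    | lamCong h => exact ih _ h

/- ===== Translation ===== -/
mutual
theorem trT_fun : ∀ {Γ : List ℕ} {M : Tm} {U U' : NTm}, TrTm Γ M U → TrTm Γ M U' → U = U'
  | _, _, _, _, .var _ _, h' => by
    cases h' with
    | var => rfl
    | weak _ hne _ => exact absurd rfl hne
  | _, _, _, _, .weak _ hne h, h' => by
    cases h' with
    | var => exact absurd rfl hne
    | weak _ _ h' => rw [dbr_inj (trT_fun h h')]
  | _, _, _, _, .app h1 h2, h' => by
    cases h' with
    | app h1' h2' => rw [trT_fun h1 h1', trT_fun h2 h2']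
  | _, _, _, _, .lam h, h' => by
    cases h' with
    | lam h' => rw [trT_fun h h']
  | _, _, _, _, .clos h1 h2, h' => by
    cases h' with
    | clos h1' h2' =>
      obtain ⟨rfl, rfl⟩ := trS_fun h1 h1'
      rw [trT_fun h2 h2']
theorem trS_fun : ∀ {Γ : List ℕ} {s : Subst} {Δ Δ' : List ℕ} {u u' : NSub},
    TrSub Γ s Δ u → TrSub Γ s Δ' u' → Δ = Δ' ∧ u = u'
  | _, _, _, _, _, _, .id _, h' => by cases h'; exact ⟨rfl, rfl⟩
  | _, _, _, _, _, _, .pi _ _, h' => by cases h'; exact ⟨rfl, rfl⟩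
  | _, _, _, _, _, _, .cons _ h1 h2, h' => by
    cases h' with
    | cons _ h1' h2' =>
      obtain ⟨rfl, rfl⟩ := trS_fun h1 h1'
      rw [trT_fun h2 h2']; exact ⟨rfl, rfl⟩
  | _, _, _, _, _, _, .comp h1 h2, h' => by
    cases h' with
    | comp h1' h2' =>
      obtain ⟨rfl, rfl⟩ := trS_fun h1 h1'
      obtain ⟨rfl, rfl⟩ := trS_fun h2 h2'
      exact ⟨rfl, rfl⟩
end

/- inversion of the variable judgement -/
theorem tr_var_cons {c b : ℕ} {Γ : List ℕ} {U : NTm} (h : TrTm (c :: Γ) (.var b) U)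
    (hne : c ≠ b) : ∃ n, TrTm Γ (.var b) (dbr n) ∧ U = dbr (n + 1) := by
  cases h with
  | var => exact absurd rfl hne
  | weak _ _ h => exact ⟨_, h, rfl⟩

theorem tr_var_dbr {b : ℕ} {Γ : List ℕ} {U : NTm} (h : TrTm Γ (.var b) U) : ∃ n, U = dbr n := by
  cases h with
  | var => exact ⟨0, rfl⟩
  | weak _ _ h => exact ⟨_, rfl⟩

mutual
theorem simT : ∀ {β : Bool} {M M' : Tm}, StepTm β M M' → β = false → ∀ {Γ U}, TrTm Γ M U →
    ∃ U', TrTm Γ M' U' ∧ semT U' = semT U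
  | _, _, _, .beta, hb, _, _, _ => by cases hb
  | _, _, _, .abs, _, _, _, .clos hs (.lam hM) => by
    refine ⟨_, .lam (.clos (.cons _ (.comp (.pi _ _) hs) (.var _ _)) hM), ?_⟩
    simp [semT, semS, Lm.sub, Lm.up_eq, semT_dbr]
  | _, _, _, .app, _, _, _, .clos hs (.app hM hN) =>
    ⟨_, .app (.clos hs hM) (.clos hs hN), by simp [semT, Lm.sub]⟩
  | _, _, _, .consVar, _, _, _, .clos (.cons _ hs hN) hv => by
    refine ⟨_, hN, ?_⟩
    rw [trT_fun hv (.var _ _)]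
    simp [semT, semS, semT_dbr, Lm.sub, Lm.scons]
  | _, _, _, .new hne, _, _, _, .clos (.cons _ hs hN) hv => by
    obtain ⟨n, hn, rfl⟩ := tr_var_cons hv hne
    refine ⟨_, .clos hs hn, ?_⟩
    simp [semT, semS, semT_dbr, Lm.sub, Lm.scons]
  | _, _, _, .idVar, _, _, _, .clos (.id _) hv => ⟨_, hv, by simp [semT, semS, Lm.sub_var]⟩
  | _, _, _, .clos, _, _, _, .clos hs (.clos hq hM) =>
    ⟨_, .clos (.comp hs hq) hM, by simp [semT, semS, Lm.sub_sub]⟩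
  | _, _, _, .pi1 hne, _, _, _, .clos (.pi _ _) hv => by
    obtain ⟨n, rfl⟩ := tr_var_dbr hv
    exact ⟨_, .weak _ hne.symm hv, by simp [semT, semS, Lm.sub, semT_dbr]⟩
  | _, _, _, .pi2 hne, _, _, _, .clos (.comp hs (.pi _ _)) hv => by
    obtain ⟨n, rfl⟩ := tr_var_dbr hv
    exact ⟨_, .clos hs (.weak _ hne.symm hv), by simp [semT, semS, Lm.sub, semT_dbr]⟩
  | _, _, _, .alpha1 _ _, _, _, _, .lam hM =>
    ⟨_, .lam (.clos (.cons _ (.pi _ _) (.var _ _)) hM), by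
      simp [semT, semS, semT_dbr, Lm.scons_shift, Lm.sub_var]⟩
  | _, _, _, .lamCong h, hb, _, _, .lam hM => by
    obtain ⟨U', h1, h2⟩ := simT h hb hM
    exact ⟨_, .lam h1, by simp [semT, h2]⟩
  | _, _, _, .appL h, hb, _, _, .app hM hN => by
    obtain ⟨U', h1, h2⟩ := simT h hb hM
    exact ⟨_, .app h1 hN, by simp [semT, h2]⟩
  | _, _, _, .appR h, hb, _, _, .app hM hN => by
    obtain ⟨U', h1, h2⟩ := simT h hb hN
    exact ⟨_, .app hM h1, by simp [semT, h2]⟩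
  | _, _, _, .closL h, hb, _, _, .clos hs hM => by
    obtain ⟨U', h1, h2⟩ := simS h hb hs
    exact ⟨_, .clos h1 hM, by simp [semT, h2]⟩
  | _, _, _, .closR h, hb, _, _, .clos hs hM => by
    obtain ⟨U', h1, h2⟩ := simT h hb hM
    exact ⟨_, .clos hs h1, by simp [semT, h2]⟩
theorem simS : ∀ {β : Bool} {s s' : Subst}, StepSub β s s' → β = false → ∀ {Γ Δ u}, TrSub Γ s Δ u →
    ∃ u', TrSub Γ s' Δ u' ∧ semS u' = semS u
  | _, _, _, .ass, _, _, _, _, .comp hs (.comp hq hr) =>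
    ⟨_, .comp (.comp hs hq) hr, by simp [semS, Lm.sub_sub]⟩
  | _, _, _, .idR, _, _, _, _, .comp hs (.id _) => ⟨_, hs, by simp [semS, Lm.sub]⟩
  | _, _, _, .idShift, _, _, _, _, .comp h1 h2 => by
    cases h1
    exact ⟨_, h2, by simp [semS, Lm.sub_var]⟩
  | _, _, _, .consShift, _, _, _, _, .comp (.cons _ hs _) (.pi _ _) =>
    ⟨_, hs, by simp [semS, Lm.sub, Lm.scons]⟩
  | _, _, _, .map, _, _, _, _, .comp hs (.cons _ hq hN) => by
    refine ⟨_, .cons _ (.comp hs hq) (.clos hs hN), ?_⟩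
    funext n; cases n <;> simp [semS, semT, Lm.scons]
  | _, _, _, .consL h, hb, _, _, _, .cons _ hs hN => by
    obtain ⟨u', h1, h2⟩ := simS h hb hs
    exact ⟨_, .cons _ h1 hN, by simp [semS, h2]⟩
  | _, _, _, .consR h, hb, _, _, _, .cons _ hs hN => by
    obtain ⟨u', h1, h2⟩ := simT h hb hN
    exact ⟨_, .cons _ hs h1, by simp [semS, h2]⟩
  | _, _, _, .compL h, hb, _, _, _, .comp hs hq => by
    obtain ⟨u', h1, h2⟩ := simS h hb hs
    exact ⟨_, .comp h1 hq, by simp [semS, h2]⟩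
  | _, _, _, .compR h, hb, _, _, _, .comp hs hq => by
    obtain ⟨u', h1, h2⟩ := simS h hb hq
    exact ⟨_, .comp hs h1, by simp [semS, h2]⟩
end

theorem tr_uparrow (a b : ℕ) (Γ Δ : List ℕ) :
    ∃ u, TrSub (Δ ++ b :: Γ) (Uparrow Δ (.cons (.pi b) (.var b) a)) (Δ ++ a :: Γ) u ∧
      semS u = Lm.var := by
  induction Δ with
  | nil => exact ⟨_, .cons _ (.pi _ _) (.var _ _), by simp [semS, semT_dbr, Lm.scons_shift]⟩
  | cons c Δ ih =>
    obtain ⟨u, h1, h2⟩ := ih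
    refine ⟨_, .cons _ (.comp (.pi _ _) h1) (.var _ _), ?_⟩
    simp [semS, h2, semT_dbr, Lm.sub, Lm.scons_shift]

theorem simJ {p q : List ℕ × Tm} (h : StepJ false p q) {U} (hU : TrTm p.1 p.2 U) :
    ∃ U', TrTm q.1 q.2 U' ∧ semT U' = semT U := by
  cases h with
  | step h => exact simT h rfl hU
  | alpha2 _ _ =>
    obtain ⟨u, h1, h2⟩ := tr_uparrow _ _ _ _
    exact ⟨_, .clos h1 hU, by simp [semT, h2, Lm.sub_var]⟩

theorem simJ_star {p q : List ℕ × Tm} (h : Relation.ReflTransGen (StepJ false) p q) {U}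
    (hU : TrTm p.1 p.2 U) : ∃ U', TrTm q.1 q.2 U' ∧ semT U' = semT U := by
  induction h with
  | refl => exact ⟨U, hU, rfl⟩
  | tail _ hs ih =>
    obtain ⟨U1, h1, e1⟩ := ih
    obtain ⟨U2, h2, e2⟩ := simJ hs h1
    exact ⟨U2, h2, e2.trans e1⟩

/- ===== Free variables ===== -/
theorem Olam_sub {A : ℕ → Finset ℕ} {B : Finset ℕ} (a : ℕ) (h : ∀ i, A i ⊆ B) :
    ∀ i, Olam a A i ⊆ B := by
  intro i
  cases i with
  | zero =>
    exact Finset.union_subset ((Finset.erase_subset _ _).trans (h 0)) (h 1)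
  | succ n => exact h _

mutual
theorem FV_bdd : ∀ M : Tm, ∃ B : Finset ℕ, ∀ i, FV M i ⊆ B
  | .var a => ⟨{a}, fun i => by simp only [FV]; split <;> simp⟩
  | .app M N => by
    obtain ⟨B, h⟩ := FV_bdd M
    obtain ⟨C, h'⟩ := FV_bdd N
    refine ⟨B ∪ C, fun i => ?_⟩
    simp only [FV]
    exact Finset.union_subset_union (h i) (h' i)
  | .lam a M => by
    obtain ⟨B, h⟩ := FV_bdd M
    refine ⟨B, ?_⟩
    simp only [FV]
    exact Olam_sub a h
  | .clos s M => by
    obtain ⟨B, h⟩ := FV_bdd M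
    simp only [FV]
    exact Osub_bdd s _ B h
theorem Osub_bdd : ∀ (s : Subst) (A : ℕ → Finset ℕ) (B : Finset ℕ), (∀ i, A i ⊆ B) →
    ∃ C : Finset ℕ, ∀ i, Osub s A i ⊆ C
  | .id, A, B, h => ⟨B, by simpa only [Osub] using h⟩
  | .pi _, A, B, h => ⟨B, fun i => by
      simp only [Osub]
      cases i with
      | zero => simp [Opi]
      | succ n => exact h n⟩
  | .cons s N a, A, B, h => by
    obtain ⟨C, h1⟩ := Osub_bdd s (Olam a A) B (Olam_sub a h)
    obtain ⟨D, h2⟩ := FV_bdd N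
    refine ⟨C ∪ D, fun i => ?_⟩
    simp only [Osub]
    exact Finset.union_subset_union (h1 i) (h2 i)
  | .comp s q, A, B, h => by
    obtain ⟨C, h1⟩ := Osub_bdd q A B h
    simp only [Osub]
    exact Osub_bdd s _ C h1
end

theorem exists_fresh (M : Tm) : ∃ b, ∀ i, b ∉ FV M i := by
  obtain ⟨B, h⟩ := FV_bdd M
  obtain ⟨b, hb⟩ := Infinite.exists_notMem_finset B
  exact ⟨b, fun i hi => hb (h i hi)⟩

theorem FVJ_mono (Δ : List ℕ) : ∀ {M N : Tm}, (∀ i, FV M i ⊆ FV N i) →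
    ∀ i, FVJ Δ M i ⊆ FVJ Δ N i := by
  induction Δ with
  | nil => intro M N h; exact h
  | cons c Δ ih =>
    intro M N h
    refine ih (M := .lam c M) (N := .lam c N) ?_
    intro i
    simp only [FV]
    cases i with
    | zero => exact Finset.union_subset_union (Finset.erase_subset_erase _ (h 0)) (h 1)
    | succ n => exact h _

theorem FVJ_ge (Δ : List ℕ) : ∀ (M : Tm) (i : ℕ), FV M (i + Δ.length) ⊆ FVJ Δ M i := by
  induction Δ with
  | nil => intro M i; exact subset_rfl
  | cons c Δ ih =>
    intro M i
    refine subset_trans ?_ (ih (.lam c M) i)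
    simp only [FV, List.length_cons]
    cases h : i + Δ.length with
    | zero => 
      rw [show i + (Δ.length + 1) = 1 by omega]
      exact Finset.subset_union_right
    | succ n => rw [show i + (Δ.length + 1) = n + 2 by omega]; exact subset_rfl

/- ===== Normal forms ===== -/
inductive Chain : Subst → List ℕ → ℕ → Prop
  | pi (a) : Chain (.pi a) [] a
  | comp {s Δ c} (a) : Chain s Δ c → Chain (.comp s (.pi a)) (Δ ++ [c]) a

theorem chain_tr {s Δ a} (h : Chain s Δ a) : ∀ {Γ Γ' u}, TrSub Γ s Γ' u → Γ = Δ ++ a :: Γ' := by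
  induction h with
  | pi a => intro Γ Γ' u h; cases h; rfl
  | comp a _ ih =>
    intro Γ Γ' u h
    cases h with
    | comp h1 h2 =>
      cases h2
      rw [ih h1]; simp

theorem chain_O {s Δ a} (h : Chain s Δ a) : ∀ A n, Osub s A (n + Δ.length + 1) = A n := by
  induction h with
  | pi a => intro A n; simp [Osub, Opi]
  | @comp s Δ c a _ ih =>
    intro A n
    have := ih (Opi A) (n + 1)
    simp only [Osub, List.length_append, List.length_cons, List.length_nil]
    rw [show n + (Δ.length + (0 + 1)) + 1 = n + 1 + Δ.length + 1 by omega, this]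
    rfl

theorem sub_nf : ∀ (s : Subst), (∀ s', ¬ StepSub false s s') → ∀ {Γ Δ u}, TrSub Γ s Δ u →
    s = .id ∨ (∃ q N a, s = .cons q N a) ∨ ∃ Δ a, Chain s Δ a
  | .id, _, _, _, _, _ => .inl rfl
  | .pi a, _, _, _, _, _ => .inr (.inr ⟨_, _, .pi a⟩)
  | .cons q N a, _, _, _, _, _ => .inr (.inl ⟨_, _, _, rfl⟩)
  | .comp s .id, hn, _, _, _, _ => (hn _ .idR).elim
  | .comp s (.comp _ _), hn, _, _, _, _ => (hn _ .ass).elim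
  | .comp s (.cons _ _ _), hn, _, _, _, _ => (hn _ .map).elim
  | .comp s (.pi a), hn, _, _, _, .comp h1 (.pi _ _) => by
    rcases sub_nf s (fun s' h => hn _ (.compL h)) h1 with rfl | ⟨q, N, c, rfl⟩ | ⟨Δ, c, h⟩
    · exact (hn _ .idShift).elim
    · cases h1
      exact (hn _ .consShift).elim
    · exact .inr (.inr ⟨_, _, .comp a h⟩)

theorem tm_nf : ∀ (M : Tm), (∀ M', ¬ StepTm false M M') → ∀ {Γ U}, TrTm Γ M U →
    (∃ t, U = quo t) ∨ ∃ Δ a Γ', Γ = Δ ++ a :: Γ' ∧ ∃ i, a ∈ FVJ (Δ ++ [a]) M i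
  | .var b, _, _, _, h => by
    obtain ⟨n, rfl⟩ := tr_var_dbr h
    exact .inl ⟨.var n, rfl⟩
  | .app M N, hn, _, _, .app h1 h2 => by
    rcases tm_nf M (fun _ h => hn _ (.appL h)) h1 with ⟨t, rfl⟩ | ⟨Δ, a, Γ', e, i, hi⟩
    · rcases tm_nf N (fun _ h => hn _ (.appR h)) h2 with ⟨t', rfl⟩ | ⟨Δ, a, Γ', e, i, hi⟩
      · exact .inl ⟨.app t t', rfl⟩
      · refine .inr ⟨Δ, a, Γ', e, i, FVJ_mono _ ?_ _ hi⟩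
        intro i; simp only [FV]; exact Finset.subset_union_right
    · refine .inr ⟨Δ, a, Γ', e, i, FVJ_mono _ ?_ _ hi⟩
      intro i; simp only [FV]; exact Finset.subset_union_left
  | .lam c M, hn, _, _, .lam h => by
    rcases tm_nf M (fun _ h => hn _ (.lamCong h)) h with ⟨t, rfl⟩ | ⟨Δ, a, Γ', e, i, hi⟩
    · exact .inl ⟨.lam t, rfl⟩
    · cases Δ with
      | nil =>
        obtain ⟨rfl, rfl⟩ := List.cons.inj e
        obtain ⟨b, hb⟩ := exists_fresh (.lam c M)
        exact (hn _ (.alpha1 ⟨i, hi⟩ hb)).elim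
      | cons d Δ =>
        obtain ⟨rfl, e'⟩ := List.cons.inj e
        exact .inr ⟨Δ, a, Γ', e', i, hi⟩
  | .clos s (.app _ _), hn, _, _, _ => (hn _ .app).elim
  | .clos s (.lam _ _), hn, _, _, _ => (hn _ .abs).elim
  | .clos s (.clos _ _), hn, _, _, _ => (hn _ .clos).elim
  | .clos s (.var b), hn, _, _, .clos h1 h2 => by
    rcases sub_nf s (fun s' h => hn _ (.closL h)) h1 with rfl | ⟨q, N, c, rfl⟩ | ⟨Δ, c, h⟩
    · exact (hn _ .idVar).elim
    · by_cases hc : c = b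
      · subst hc; exact (hn _ .consVar).elim
      · exact (hn _ (.new hc)).elim
    · by_cases hc : c = b
      · subst hc
        refine .inr ⟨Δ, c, _, chain_tr h h1, 0, FVJ_ge _ _ _ ?_⟩
        have := chain_O h (FV (.var c)) 0
        simp only [List.length_append, List.length_cons, List.length_nil]
        rw [show FV (.clos s (.var c)) = Osub s (FV (.var c)) by simp only [FV]]
        rw [show 0 + (Δ.length + (0 + 1)) = 0 + Δ.length + 1 by omega, this]
        simp [FV]
      · cases h with
        | pi => exact (hn _ (.pi1 hc)).elim
        | comp _ _ => exact (hn _ (.pi2 hc)).elim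

theorem semT_quo (t : Lm) : semT (quo t) = t := by
  induction t with
  | var n => exact semT_dbr n
  | app t u iht ihu => simp [quo, semT, iht, ihu]
  | lam t ih => simp [quo, semT, ih]

/-- a σπα-normal form of a judgement translates to a σ-normal form,
reachable by σ-reduction from the translation of the original judgement. -/
theorem spa_nf_corresponds {Γ Θ : List ℕ} {M L : Tm} {U V : NTm}
    (hred : Relation.ReflTransGen (StepJ false) (Γ, M) (Θ, L))
    (hnf : ∀ p : List ℕ × Tm, ¬ StepJ false (Θ, L) p)
    (hU : TrTm Γ M U) (hV : TrTm Θ L V) :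
    (∀ W : NTm, ¬ NStepTm false V W) ∧ Relation.ReflTransGen (NStepTm false) U V := by
  obtain ⟨V', hV', e⟩ := simJ_star hred hU
  obtain rfl := trT_fun hV hV'
  rcases tm_nf L (fun M' h => hnf _ (.step h)) hV with ⟨t, rfl⟩ | ⟨Δ, a, Γ', rfl, i, hi⟩
  · refine ⟨quo_nf t, ?_⟩
    have := wnT U
    rwa [← e, semT_quo] at this
  · obtain ⟨b, hb⟩ := exists_fresh (lamCtx (Δ ++ [a]) L)
    exact (hnf _ (.alpha2 ⟨i, hi⟩ hb)).elim
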